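/- arXiv:2510.01813 — 8 statements merged into one kernel-verified Lean document; each statement's English description precedes it below -/
import Mathlib

section
/- (Proposition 1) Let y ∈ ℝ^N, σ > 0, ℓ_i = 2|y_i|/σ², and let C ⊆ F_2^N be a nonempty code. Let e(1), e(2), …, e(2^N) be a bijective enumeration of F_2^N such that ζ(e(1)) ≤ ζ(e(2)) ≤ … ≤ ζ(e(2^N)), and let t* be the least index t with θ(y) ⊕ e(t) ∈ C. Then θ(y) ⊕ e(t*) is a maximum-likelihood codeword: for every w ∈ C, ∏_{i=1}^N p(y_i | (θ(y) ⊕ e(t*))_i) ≥ ∏_{i=1}^N p(y_i | w_i). -/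
open scoped BigOperators

/-- Channel output density for antipodal signaling over AWGN:
`p(y | w) = (2πσ²)^{−1/2} exp(−(y − (−1)^w)² / (2σ²))`. -/
noncomputable def chanP (σ y : ℝ) (w : ZMod 2) : ℝ :=
  (Real.sqrt (2 * Real.pi * σ ^ 2))⁻¹ *
    Real.exp (-(y - (if w = 0 then 1 else -1)) ^ 2 / (2 * σ ^ 2))

/-- Hard decision: `θ(y) = 0` if `y ≥ 0`, else `1`. -/
noncomputable def hardDec (y : ℝ) : ZMod 2 := if 0 ≤ y then 0 else 1

/-- Soft weight of an error pattern: `ζ(e) = Σ_{i : e_i = 1} ℓ_i`. -/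
noncomputable def zeta {N : ℕ} (ℓ : Fin N → ℝ) (e : Fin N → ZMod 2) : ℝ :=
  ∑ i, if e i = 1 then ℓ i else 0

theorem chanP_hardDec_add (σ : ℝ) (hσ : 0 < σ) (y : ℝ) (e : ZMod 2) :
    chanP σ y (hardDec y + e) =
      chanP σ y (hardDec y) * Real.exp (-(if e = 1 then 2 * |y| / σ ^ 2 else 0)) := by
  have h11 : (1 : ZMod 2) + 1 = 0 := by decide
  have h10 : (1 : ZMod 2) ≠ 0 := by decide
  have h01 : (0 : ZMod 2) ≠ 1 := by decide
  have he : e = 0 ∨ e = 1 := by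
    revert e; decide
  have hs : σ ≠ 0 := hσ.ne'
  unfold chanP hardDec
  rcases he with rfl | rfl
  · simp
  · rw [mul_assoc _ (Real.exp _) (Real.exp _), ← Real.exp_add]
    congr 2
    by_cases hy : 0 ≤ y
    · simp only [hy, if_true, zero_add, h10, if_false, abs_of_nonneg hy]
      field_simp
      ring
    · simp only [hy, if_true, h11, h10, if_false, abs_of_neg (not_le.mp hy)]
      field_simp
      ring

theorem prod_chanP_hardDec_add {N : ℕ} (σ : ℝ) (hσ : 0 < σ) (y ℓ : Fin N → ℝ)
    (hℓ : ∀ i, ℓ i = 2 * |y i| / σ ^ 2) (e : Fin N → ZMod 2) :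
    ∏ i, chanP σ (y i) (((fun i => hardDec (y i)) + e) i) =
      (∏ i, chanP σ (y i) (hardDec (y i))) * Real.exp (-zeta ℓ e) := by
  unfold zeta
  rw [← Finset.sum_neg_distrib, Real.exp_sum, ← Finset.prod_mul_distrib]
  refine Finset.prod_congr rfl fun i _ => ?_
  rw [Pi.add_apply, chanP_hardDec_add σ hσ, hℓ]

/-- Proposition 1: if `e(1), …, e(2^N)` bijectively enumerates `F₂^N`
in nondecreasing order of soft weight and `t*` is the least index with
`θ(y) ⊕ e(t) ∈ C`, then `θ(y) ⊕ e(t*)` is a maximum-likelihood codeword. -/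
theorem stmt3 {N : ℕ} (σ : ℝ) (hσ : 0 < σ) (y ℓ : Fin N → ℝ)
    (hℓ : ∀ i, ℓ i = 2 * |y i| / σ ^ 2)
    (C : Set (Fin N → ZMod 2)) (hC : C.Nonempty)
    (E : Fin (2 ^ N) → (Fin N → ZMod 2)) (hbij : Function.Bijective E)
    (hord : ∀ s t : Fin (2 ^ N), s ≤ t → zeta ℓ (E s) ≤ zeta ℓ (E t))
    (tstar : Fin (2 ^ N))
    (hvalid : (fun i => hardDec (y i)) + E tstar ∈ C)
    (hleast : ∀ t : Fin (2 ^ N), (fun i => hardDec (y i)) + E t ∈ C → tstar ≤ t) :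
    ∀ w ∈ C, (∏ i, chanP σ (y i) (w i)) ≤
      ∏ i, chanP σ (y i) (((fun i => hardDec (y i)) + E tstar) i) := by
  intro w hw
  obtain ⟨t, ht⟩ := hbij.2 (w - fun i => hardDec (y i))
  have hwt : w = (fun i => hardDec (y i)) + E t := by rw [ht]; abel
  have hle := hord _ _ (hleast t (hwt ▸ hw))
  rw [hwt, prod_chanP_hardDec_add σ hσ y ℓ hℓ, prod_chanP_hardDec_add σ hσ y ℓ hℓ]
  refine mul_le_mul_of_nonneg_left (Real.exp_le_exp.mpr (neg_le_neg hle)) ?_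
  refine Finset.prod_nonneg fun i _ => ?_
  unfold chanP
  positivity
end

section
/- Assume ℓ_i ≥ 0 for all i and ℓ_{r_1} ≤ ℓ_{r_2} ≤ … ≤ ℓ_{r_N}. If e' is a child of e in the EP tree, then ζ(e) ≤ ζ(e'); moreover if e' is the right child of a nonzero e and ℓ_{r_{j*(e)+1}} > 0, then ζ(e) < ζ(e'). -/
open scoped BigOperators

/-- `j*(e)`: the (1-indexed) largest position `j` with `e_{r_j} = 1`; `j*(0) = 0`. -/
def jstar {N : ℕ} (r : Equiv.Perm (Fin N)) (e : Fin N → ZMod 2) : ℕ :=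
  (Finset.univ.filter fun j : Fin N => e (r j) = 1).sup fun j => (j : ℕ) + 1

/-- The child relation of the EP tree on `F₂^N`: the root `0` has a single child
(the vector with a `1` in coordinate `r_1`); a nonzero `e` with `j*(e) < N` has a
left child (coordinate `r_{j*}` set to `0`, coordinate `r_{j*+1}` set to `1`) and a
right child (coordinate `r_{j*+1}` set to `1`); a node with `j*(e) = N` has no children. -/
def Child {N : ℕ} (r : Equiv.Perm (Fin N)) (e c : Fin N → ZMod 2) : Prop :=
  (e = 0 ∧ ∃ h : 0 < N,
    c = Function.update (0 : Fin N → ZMod 2) (r ⟨0, h⟩) 1) ∨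
  (e ≠ 0 ∧ ∃ h : jstar r e < N,
    c = Function.update
        (Function.update e (r ⟨jstar r e - 1, lt_of_le_of_lt (Nat.sub_le _ _) h⟩) 0)
        (r ⟨jstar r e, h⟩) 1 ∨
    c = Function.update e (r ⟨jstar r e, h⟩) 1)

theorem zeta_update {N : ℕ} (ℓ : Fin N → ℝ) (e : Fin N → ZMod 2) (k : Fin N) (v : ZMod 2) :
    zeta ℓ (Function.update e k v) =
      zeta ℓ e - (if e k = 1 then ℓ k else 0) + (if v = 1 then ℓ k else 0) := by
  unfold zeta
  rw [← Finset.add_sum_erase _ _ (Finset.mem_univ k),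
    ← Finset.add_sum_erase (a := k) Finset.univ (fun i => if e i = 1 then ℓ i else 0)
      (Finset.mem_univ k)]
  have h : ∑ x ∈ Finset.univ.erase k, (if Function.update e k v x = 1 then ℓ x else 0) =
      ∑ x ∈ Finset.univ.erase k, (if e x = 1 then ℓ x else 0) := by
    apply Finset.sum_congr rfl
    intro x hx
    rw [Function.update_of_ne (Finset.ne_of_mem_erase hx)]
  rw [h, Function.update_self]
  ring

theorem at_jstar_ne_one {N : ℕ} (r : Equiv.Perm (Fin N)) (e : Fin N → ZMod 2)
    (hj : jstar r e < N) : e (r ⟨jstar r e, hj⟩) ≠ 1 := by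
  intro h
  have h2 : (jstar r e) + 1 ≤ jstar r e :=
    Finset.le_sup (s := Finset.univ.filter fun j : Fin N => e (r j) = 1)
      (f := fun j : Fin N => (j : ℕ) + 1) (b := ⟨jstar r e, hj⟩) (by simpa using h)
  omega

/-- with nonnegative reliabilities sorted along `r`, if `e'` is a child
of `e` then `ζ(e) ≤ ζ(e')`; moreover if `e'` is the right child of a nonzero `e` and
`ℓ_{r_{j*(e)+1}} > 0`, then `ζ(e) < ζ(e')`. -/
theorem stmt5 {N : ℕ} (r : Equiv.Perm (Fin N)) (ℓ : Fin N → ℝ)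
    (hnn : ∀ i, 0 ≤ ℓ i)
    (hsorted : ∀ i j : Fin N, i ≤ j → ℓ (r i) ≤ ℓ (r j))
    (e e' : Fin N → ZMod 2) (hchild : Child r e e') :
    zeta ℓ e ≤ zeta ℓ e' ∧
    (e ≠ 0 → ∀ (hj : jstar r e < N),
      e' = Function.update e (r ⟨jstar r e, hj⟩) 1 →
      0 < ℓ (r ⟨jstar r e, hj⟩) →
      zeta ℓ e < zeta ℓ e') := by
  constructor
  · rcases hchild with ⟨rfl, h, rfl⟩ | ⟨_, h, rfl | rfl⟩
    · rw [zeta_update]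
      have := hnn (r ⟨0, h⟩)
      simpa using this
    · have h1 := at_jstar_ne_one r e h
      have h2 : Function.update e
          (r ⟨jstar r e - 1, lt_of_le_of_lt (Nat.sub_le _ _) h⟩) 0 (r ⟨jstar r e, h⟩) ≠ 1 := by
        rw [Function.update_apply]
        split_ifs
        · exact zero_ne_one
        · exact h1
      rw [zeta_update, zeta_update, if_neg h2, if_neg (zero_ne_one : (0 : ZMod 2) ≠ 1),
        if_pos rfl]
      have h3 := hsorted ⟨jstar r e - 1, lt_of_le_of_lt (Nat.sub_le _ _) h⟩ ⟨jstar r e, h⟩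
        (Fin.mk_le_mk.2 (Nat.sub_le _ _))
      have h4 := hnn (r ⟨jstar r e, h⟩)
      split_ifs <;> linarith
    · rw [zeta_update, if_neg (at_jstar_ne_one r e h), if_pos rfl]
      have h4 := hnn (r ⟨jstar r e, h⟩)
      linarith
  · intro _ hj he hpos
    rw [he, zeta_update, if_neg (at_jstar_ne_one r e hj), if_pos rfl]
    linarith
end

section
/- Every nonzero e ∈ F_2^N is the child of exactly one vector in the EP tree; that is, there exists a unique e^P ∈ F_2^N such that e is a child of e^P. -/
open scoped BigOperators

/-- `k` is the top position of the support of `p`. -/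
def EPTop {N : ℕ} (r : Equiv.Perm (Fin N)) (p : Fin N → ZMod 2) (k : Fin N) : Prop :=
  p (r k) = 1 ∧ ∀ j, k < j → p (r j) = 0

theorem EPTop.unique {N : ℕ} {r : Equiv.Perm (Fin N)} {p : Fin N → ZMod 2} {k l : Fin N}
    (hk : EPTop r p k) (hl : EPTop r p l) : k = l := by
  rcases lt_trichotomy k l with h | h | h
  · have h1 := hk.2 l h
    rw [hl.1] at h1
    exact absurd h1 (by decide)
  · exact h
  · have h1 := hl.2 k h
    rw [hk.1] at h1
    exact absurd h1 (by decide)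

theorem EPTop.jstar_eq {N : ℕ} {r : Equiv.Perm (Fin N)} {p : Fin N → ZMod 2} {k : Fin N}
    (hk : EPTop r p k) : jstar r p = k + 1 := by
  unfold jstar
  apply le_antisymm
  · apply Finset.sup_le
    intro j hj
    have hj1 : p (r j) = 1 := by simpa using hj
    by_contra hlt
    have h0 := hk.2 j (by rw [Fin.lt_def]; omega)
    rw [hj1] at h0
    exact absurd h0 (by decide)
  · exact Finset.le_sup (f := fun j : Fin N => (j : ℕ) + 1) (by simpa using hk.1)

theorem zmod2_cases (a : ZMod 2) : a = 0 ∨ a = 1 := by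
  revert a; decide

theorem exists_epTop {N : ℕ} (r : Equiv.Perm (Fin N)) (p : Fin N → ZMod 2) (hp : p ≠ 0) :
    ∃ k, EPTop r p k := by
  have hne : (Finset.univ.filter fun j : Fin N => p (r j) = 1).Nonempty := by
    by_contra hcon
    rw [Finset.not_nonempty_iff_eq_empty] at hcon
    apply hp
    funext i
    rcases zmod2_cases (p i) with h | h
    · exact h
    · have : r.symm i ∈ (Finset.univ.filter fun j : Fin N => p (r j) = 1) := by simpa using h
      rw [hcon] at this
      simp at this
  obtain ⟨k, hk, hmax⟩ := Finset.exists_max_image _ (fun j : Fin N => j) hne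
  refine ⟨k, by simpa using hk, fun j hj => ?_⟩
  rcases zmod2_cases (p (r j)) with h | h
  · exact h
  · exact absurd (hmax j (by simpa using h)) (not_le.mpr hj)

/-- Restatement of `Child` with explicit top positions. -/
theorem child_iff {N : ℕ} (r : Equiv.Perm (Fin N)) (p c : Fin N → ZMod 2) :
    Child r p c ↔ (p = 0 ∧ ∃ h : 0 < N, c = Function.update (0 : Fin N → ZMod 2) (r ⟨0, h⟩) 1) ∨
      ∃ m l : Fin N, (l : ℕ) = m + 1 ∧ EPTop r p m ∧
        (c = Function.update (Function.update p (r m) 0) (r l) 1 ∨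
          c = Function.update p (r l) 1) := by
  unfold Child
  apply or_congr Iff.rfl
  constructor
  · rintro ⟨hp, h, hc⟩
    obtain ⟨m, hm⟩ := exists_epTop r p hp
    have e1 : (⟨jstar r p - 1, lt_of_le_of_lt (Nat.sub_le _ _) h⟩ : Fin N) = m := by
      apply Fin.ext; simp [hm.jstar_eq]
    rw [e1] at hc
    exact ⟨m, ⟨jstar r p, h⟩, hm.jstar_eq, hm, hc⟩
  · rintro ⟨m, l, hl, hm, hc⟩
    have hj : jstar r p = l := by rw [hm.jstar_eq, hl]
    have h : jstar r p < N := by rw [hj]; exact l.2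
    refine ⟨?_, h, ?_⟩
    · rintro rfl
      exact absurd hm.1 (by simp)
    · have e1 : (⟨jstar r p - 1, lt_of_le_of_lt (Nat.sub_le _ _) h⟩ : Fin N) = m := by
        apply Fin.ext; simp [hm.jstar_eq]
      have e2 : (⟨jstar r p, h⟩ : Fin N) = l := Fin.ext hj
      rw [e1, e2]
      exact hc

theorem upd_apply {N : ℕ} (r : Equiv.Perm (Fin N)) (p : Fin N → ZMod 2) (l j : Fin N)
    (a : ZMod 2) : Function.update p (r l) a (r j) = if j = l then a else p (r j) := by
  simp [Function.update_apply]

theorem ext_perm {N : ℕ} (r : Equiv.Perm (Fin N)) {p q : Fin N → ZMod 2}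
    (h : ∀ j, p (r j) = q (r j)) : p = q := by
  funext i
  simpa using h (r.symm i)

theorem child_top {N : ℕ} {r : Equiv.Perm (Fin N)} {p c : Fin N → ZMod 2} {m l : Fin N}
    (hl : (l : ℕ) = m + 1) (hm : EPTop r p m)
    (hc : c = Function.update (Function.update p (r m) 0) (r l) 1 ∨
          c = Function.update p (r l) 1) : EPTop r c l := by
  rcases hc with rfl | rfl
  · refine ⟨by simp, fun j hj => ?_⟩
    have h1 : j ≠ l := ne_of_gt hj
    have h2 : m < j := by rw [Fin.lt_def] at *; omega
    rw [upd_apply, upd_apply, if_neg h1, if_neg (ne_of_gt h2), hm.2 j h2]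
  · refine ⟨by simp, fun j hj => ?_⟩
    have h1 : j ≠ l := ne_of_gt hj
    have h2 : m < j := by rw [Fin.lt_def] at *; omega
    rw [upd_apply, if_neg h1, hm.2 j h2]

/-- every nonzero `e ∈ F₂^N` is the child of exactly one vector in the
EP tree. -/
theorem stmt7 {N : ℕ} (r : Equiv.Perm (Fin N))
    (e : Fin N → ZMod 2) (he : e ≠ 0) :
    ∃! p : Fin N → ZMod 2, Child r p e := by
  obtain ⟨k, hk⟩ := exists_epTop r e he
  have hN : 0 < N := lt_of_le_of_lt (Nat.zero_le _) k.2
  by_cases hk0 : (k : ℕ) = 0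
  · refine ⟨0, ?_, ?_⟩
    · show Child r _ e
      rw [child_iff]
      refine Or.inl ⟨rfl, hN, ext_perm r fun j => ?_⟩
      rw [upd_apply]
      have hk' : k = ⟨0, hN⟩ := Fin.ext hk0
      rw [← hk']
      split_ifs with h
      · rw [h]; exact hk.1
      · exact hk.2 j (by rw [Fin.lt_def]; have := Fin.val_ne_of_ne h; omega)
    · intro q hq
      rw [child_iff] at hq
      rcases hq with ⟨hq, -⟩ | ⟨m, l, hl, hm, hc⟩
      · exact hq
      · have := (child_top hl hm hc).unique hk
        subst this
        omega
  · obtain ⟨m, hm⟩ : ∃ m : Fin N, (k : ℕ) = m + 1 :=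
      ⟨⟨k - 1, by omega⟩, by simp; omega⟩
    have hmk : m ≠ k := by intro h; rw [h] at hm; omega
    refine ⟨Function.update (Function.update e (r k) 0) (r m) 1, ?_, ?_⟩
    · show Child r _ e
      rw [child_iff]
      refine Or.inr ⟨m, k, hm, ⟨by simp, fun j hj => ?_⟩, ?_⟩
      · rw [upd_apply, upd_apply, if_neg (ne_of_gt hj)]
        split_ifs with h
        · rfl
        · have := Fin.val_ne_of_ne h
          exact hk.2 j (by rw [Fin.lt_def] at *; omega)
      · rcases zmod2_cases (e (r m)) with h | h
        · left
          apply ext_perm r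
          intro j
          simp only [upd_apply]
          have := hk.1
          split_ifs <;> simp_all
        · right
          apply ext_perm r
          intro j
          simp only [upd_apply]
          have := hk.1
          split_ifs <;> simp_all
    · intro q hq
      rw [child_iff] at hq
      rcases hq with ⟨-, h0, hc⟩ | ⟨m', l, hl, hm', hc⟩
      · exfalso
        have h1 := hk.1
        rw [hc, upd_apply, if_neg (by intro h; rw [h] at hk0; exact hk0 rfl)] at h1
        exact absurd h1 (by simp)
      · have := (child_top hl hm' hc).unique hk
        subst this
        have : m' = m := Fin.ext (by omega)
        subst this
        apply ext_perm r
        intro j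
        have h1 := hm'.1
        have h2 := hm'.2 l (by rw [Fin.lt_def]; omega)
        rcases hc with rfl | rfl
        · simp only [upd_apply]
          split_ifs <;> simp_all
        · simp only [upd_apply]
          split_ifs <;> simp_all
end

section
/- The EP tree is complete on F_2^N: every nonzero e ∈ F_2^N is a descendant of the root 0, i.e., every vector in F_2^N is reachable from 0 by a finite chain of child steps. -/
open scoped BigOperators

theorem jstar_eq_aux {N : ℕ} (r : Equiv.Perm (Fin N)) (e : Fin N → ZMod 2) (j : Fin N)
    (h1 : e (r j) = 1) (h0 : ∀ k, j < k → e (r k) = 0) : jstar r e = (j : ℕ) + 1 := by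
  unfold jstar
  apply le_antisymm
  · apply Finset.sup_le
    intro k hk
    simp only [Finset.mem_filter, Finset.mem_univ, true_and] at hk
    by_contra hlt
    have hjk : j < k := by
      rw [Fin.lt_def]
      omega
    rw [h0 k hjk] at hk
    exact absurd hk (by decide)
  · exact Finset.le_sup (f := fun j : Fin N => (j : ℕ) + 1) (by simp [h1])

theorem reach_aux {N : ℕ} (r : Equiv.Perm (Fin N)) (n : ℕ) : ∀ (hn : n < N)
    (e : Fin N → ZMod 2), e (r ⟨n, hn⟩) = 1 →
    (∀ k : Fin N, n < (k : ℕ) → e (r k) = 0) → Relation.TransGen (Child r) 0 e := by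
  induction n with
  | zero =>
    intro hn e h1 h0
    refine Relation.TransGen.single (Or.inl ⟨rfl, hn, ?_⟩)
    funext i
    obtain ⟨k, rfl⟩ := r.surjective i
    by_cases hk : k = ⟨0, hn⟩
    · subst hk
      simp [h1]
    · have : 0 < (k : ℕ) := by
        rcases Nat.eq_zero_or_pos (k : ℕ) with h | h
        · exact absurd (Fin.ext h) hk
        · exact h
      rw [h0 k this, Function.update_of_ne (by simpa using hk)]
      rfl
  | succ n ih =>
    intro hn e h1 h0
    have hn' : n < N := by omega
    -- the parent of `e`
    let p : Fin N → ZMod 2 :=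
      Function.update (Function.update e (r ⟨n + 1, hn⟩) 0) (r ⟨n, hn'⟩) 1
    have hne : r ⟨n, hn'⟩ ≠ r ⟨n + 1, hn⟩ := by
      intro h
      have := congrArg Fin.val (r.injective h)
      simp at this
    have p1 : p (r ⟨n, hn'⟩) = 1 := by simp [p]
    have p0 : ∀ k : Fin N, n < (k : ℕ) → p (r k) = 0 := by
      intro k hk
      have hk1 : r k ≠ r ⟨n, hn'⟩ := by
        intro h
        have := congrArg Fin.val (r.injective h)
        simp at this
        omega
      by_cases hk2 : k = ⟨n + 1, hn⟩
      · subst hk2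
        simp [p, hne.symm]
      · have hk3 : (k : ℕ) ≠ n + 1 := fun h => hk2 (Fin.ext h)
        have hk4 : r k ≠ r ⟨n + 1, hn⟩ := fun h => hk2 (r.injective h)
        simp only [p]
        rw [Function.update_of_ne hk1, Function.update_of_ne hk4]
        exact h0 k (by omega)
    have hj : jstar r p = n + 1 := jstar_eq_aux r p ⟨n, hn'⟩ p1 (fun k hk => p0 k hk)
    have hp : p ≠ 0 := by
      intro h
      rw [h] at p1
      simp at p1
    refine Relation.TransGen.tail (ih hn' p p1 p0) (Or.inr ⟨hp, by omega, ?_⟩)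
    simp only [hj, Nat.add_sub_cancel]
    have hz : ∀ x : ZMod 2, x = 0 ∨ x = 1 := by decide
    rcases hz (e (r ⟨n, hn'⟩)) with h | h
    · left
      funext i
      by_cases hi1 : i = r ⟨n + 1, hn⟩
      · subst hi1
        simp [h1]
      · by_cases hi2 : i = r ⟨n, hn'⟩
        · subst hi2
          rw [Function.update_of_ne hi1, Function.update_self, h]
        · simp only [p]
          rw [Function.update_of_ne hi1, Function.update_of_ne hi2, Function.update_of_ne hi2,
            Function.update_of_ne hi1]
    · right
      funext i
      by_cases hi1 : i = r ⟨n + 1, hn⟩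
      · subst hi1
        simp [h1]
      · by_cases hi2 : i = r ⟨n, hn'⟩
        · subst hi2
          rw [Function.update_of_ne hi1, p1, h]
        · simp only [p]
          rw [Function.update_of_ne hi1, Function.update_of_ne hi2, Function.update_of_ne hi1]

/-- the EP tree is complete on `F₂^N`: every nonzero `e` is a descendant
of the root `0`, i.e. reachable from `0` by a finite chain of child steps. -/
theorem stmt8 {N : ℕ} (hN : 0 < N) (r : Equiv.Perm (Fin N))
    (e : Fin N → ZMod 2) (he : e ≠ 0) :
    Relation.TransGen (Child r) 0 e := by
  have hz : ∀ x : ZMod 2, x ≠ 0 → x = 1 := by decide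
  let S : Finset (Fin N) := Finset.univ.filter fun k => e (r k) ≠ 0
  have hS : S.Nonempty := by
    obtain ⟨i, hi⟩ := Function.ne_iff.mp he
    refine ⟨r.symm i, ?_⟩
    simpa [S] using hi
  obtain ⟨j, hjS, hmax⟩ := S.exists_max_image id hS
  refine reach_aux r j j.isLt e (hz _ (by simpa [S] using hjS)) ?_
  intro k hk
  by_contra hne
  have h := hmax k (by simpa [S] using hne)
  simp only [id, Fin.le_def] at h
  omega
end

section
/- (Monotonicity of the frontier minimum in parallel SGRAND) Assume ℓ_i ≥ 0 for all i and ℓ_{r_1} ≤ ℓ_{r_2} ≤ … ≤ ℓ_{r_N}. Let S ⊆ F_2^N be finite and nonempty, let E ⊆ S be nonempty, let E^+ ⊆ F_2^N be the set of all children (in the EP tree) of elements of E, and set S' = (S \ E) ∪ E^+. If S' is nonempty, then min_{e ∈ S} ζ(e) ≤ min_{e ∈ S'} ζ(e). -/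
open scoped BigOperators

theorem zeta_update_aux {N : ℕ} (ℓ : Fin N → ℝ) (e : Fin N → ZMod 2) (a : Fin N) (v : ZMod 2) :
    zeta ℓ (Function.update e a v) + (if e a = 1 then ℓ a else 0)
      = zeta ℓ e + (if v = 1 then ℓ a else 0) := by
  unfold zeta
  rw [← Finset.add_sum_erase _ _ (Finset.mem_univ a),
    ← Finset.add_sum_erase (a := a) _ (fun i => if e i = 1 then ℓ i else 0) (Finset.mem_univ a)]
  have : ∑ x ∈ Finset.univ.erase a, (if Function.update e a v x = 1 then ℓ x else 0)
      = ∑ x ∈ Finset.univ.erase a, (if e x = 1 then ℓ x else 0) := by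
    refine Finset.sum_congr rfl fun x hx => ?_
    rw [Function.update_of_ne (Finset.ne_of_mem_erase hx)]
  rw [this]
  simp only [Function.update_self]
  ring

theorem zeta_update_one_aux {N : ℕ} (ℓ : Fin N → ℝ) (hnn : ∀ i, 0 ≤ ℓ i)
    (e : Fin N → ZMod 2) (a : Fin N) :
    zeta ℓ e ≤ zeta ℓ (Function.update e a 1) := by
  have h := zeta_update_aux ℓ e a 1
  have := hnn a
  rw [if_pos rfl] at h
  split_ifs at h <;> linarith

theorem jstar_pos_aux {N : ℕ} (r : Equiv.Perm (Fin N)) (e : Fin N → ZMod 2) (he : e ≠ 0) :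
    0 < jstar r e := by
  obtain ⟨i, hi⟩ := Function.ne_iff.mp he
  have h1 : e i = 1 := by
    have : ∀ x : ZMod 2, x ≠ 0 → x = 1 := by decide
    exact this _ hi
  have : ((r.symm i : Fin N) : ℕ) + 1 ≤ jstar r e :=
    Finset.le_sup (f := fun j : Fin N => (j : ℕ) + 1) (by simp [h1])
  omega

theorem jstar_next_aux {N : ℕ} (r : Equiv.Perm (Fin N)) (e : Fin N → ZMod 2)
    (h : jstar r e < N) : e (r ⟨jstar r e, h⟩) ≠ 1 := by
  intro h1
  have : jstar r e + 1 ≤ jstar r e :=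
    Finset.le_sup (f := fun j : Fin N => (j : ℕ) + 1) (b := ⟨jstar r e, h⟩) (by simp [h1])
  omega

theorem zeta_child_aux {N : ℕ} (r : Equiv.Perm (Fin N)) (ℓ : Fin N → ℝ)
    (hnn : ∀ i, 0 ≤ ℓ i)
    (hsorted : ∀ i j : Fin N, i ≤ j → ℓ (r i) ≤ ℓ (r j))
    (e c : Fin N → ZMod 2) (hc : Child r e c) : zeta ℓ e ≤ zeta ℓ c := by
  rcases hc with ⟨rfl, h, rfl⟩ | ⟨he, h, rfl | rfl⟩
  · exact zeta_update_one_aux ℓ hnn _ _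
  · have hp := jstar_pos_aux r e he
    have hn := jstar_next_aux r e h
    have hlt : jstar r e - 1 < N := lt_of_le_of_lt (Nat.sub_le _ _) h
    have hs := hsorted ⟨jstar r e - 1, hlt⟩ ⟨jstar r e, h⟩ (by simp)
    have hne : r ⟨jstar r e, h⟩ ≠ r ⟨jstar r e - 1, hlt⟩ := by
      intro hh
      have := Fin.mk.inj_iff.mp (r.injective hh)
      omega
    have h1 := zeta_update_aux ℓ e (r ⟨jstar r e - 1, hlt⟩) 0
    have h2 := zeta_update_aux ℓ (Function.update e (r ⟨jstar r e - 1, hlt⟩) 0)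
      (r ⟨jstar r e, h⟩) 1
    rw [Function.update_of_ne hne, if_neg hn, if_pos rfl] at h2
    rw [if_neg (show (0 : ZMod 2) ≠ 1 by decide)] at h1
    have := hnn (r ⟨jstar r e, h⟩)
    split_ifs at h1 <;> linarith
  · exact zeta_update_one_aux ℓ hnn _ _

/-- monotonicity of the frontier minimum in parallel SGRAND: with
nonnegative reliabilities sorted along `r`, if `E ⊆ S` are nonempty, `E⁺` is the set
of all EP-tree children of elements of `E`, and `S' = (S \ E) ∪ E⁺` is nonempty, then
`min_{e ∈ S} ζ(e) ≤ min_{e ∈ S'} ζ(e)`. -/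
theorem stmt11 {N : ℕ} (r : Equiv.Perm (Fin N)) (ℓ : Fin N → ℝ)
    (hnn : ∀ i, 0 ≤ ℓ i)
    (hsorted : ∀ i j : Fin N, i ≤ j → ℓ (r i) ≤ ℓ (r j))
    (S E Eplus S' : Finset (Fin N → ZMod 2))
    (hSne : S.Nonempty) (hEne : E.Nonempty) (hES : E ⊆ S)
    (hEplus : ∀ c, c ∈ Eplus ↔ ∃ e ∈ E, Child r e c)
    (hS' : S' = (S \ E) ∪ Eplus)
    (hS'ne : S'.Nonempty) :
    S.inf' hSne (zeta ℓ) ≤ S'.inf' hS'ne (zeta ℓ) := by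
  refine Finset.le_inf' _ _ fun c hc => ?_
  rw [hS', Finset.mem_union, Finset.mem_sdiff, hEplus] at hc
  rcases hc with ⟨hc, -⟩ | ⟨e, he, hc⟩
  · exact Finset.inf'_le _ hc
  · exact (Finset.inf'_le _ (hES he)).trans (zeta_child_aux r ℓ hnn hsorted e c hc)
end

section
/- (Theorem 1, correctness of parallel SGRAND termination) Assume ℓ_i ≥ 0 for all i and ℓ_{r_1} ≤ ℓ_{r_2} ≤ … ≤ ℓ_{r_N}. Let V ⊆ F_2^N be an arbitrary set of valid error patterns, and let E, S ⊆ F_2^N be such that every element of F_2^N lies in E ∪ S ∪ {descendants of elements of S}. Suppose e* ∈ E ∩ V satisfies ζ(e*) ≤ ζ(e) for all e ∈ E ∩ V, and ζ(e*) < ζ(s) for all s ∈ S. Then ζ(e*) ≤ ζ(e) for all e ∈ V; that is, e* minimizes the soft weight over all valid error patterns. -/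
open scoped BigOperators

theorem zeta_update_one {N : ℕ} (ℓ : Fin N → ℝ) (e : Fin N → ZMod 2) (i : Fin N)
    (h : e i ≠ 1) : zeta ℓ (Function.update e i 1) = zeta ℓ e + ℓ i := by
  unfold zeta
  rw [← Finset.add_sum_erase _ _ (Finset.mem_univ i),
    ← Finset.add_sum_erase Finset.univ (fun k => if e k = 1 then ℓ k else 0) (Finset.mem_univ i)]
  have : ∑ x ∈ Finset.univ.erase i, (if Function.update e i 1 x = 1 then ℓ x else 0)
      = ∑ x ∈ Finset.univ.erase i, (if e x = 1 then ℓ x else 0) := by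
    refine Finset.sum_congr rfl fun x hx => ?_
    rw [Function.update_of_ne (Finset.ne_of_mem_erase hx)]
  rw [this]
  simp [h]
  ring

theorem zeta_update_zero {N : ℕ} (ℓ : Fin N → ℝ) (hnn : ∀ i, 0 ≤ ℓ i)
    (e : Fin N → ZMod 2) (i : Fin N) :
    zeta ℓ e ≤ zeta ℓ (Function.update e i 0) + ℓ i := by
  by_cases h : e i = 1
  · have := zeta_update_one ℓ (Function.update e i 0) i (by simp)
    rw [Function.update_idem, ← h, Function.update_eq_self] at this
    exact this.le
  · have : Function.update e i 0 = e := by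
      have h0 : e i = 0 := by
        generalize e i = x at h
        revert h; revert x; decide
      rw [← h0, Function.update_eq_self]
    rw [this]
    linarith [hnn i]

theorem child_zeta_le {N : ℕ} (r : Equiv.Perm (Fin N)) (ℓ : Fin N → ℝ)
    (hnn : ∀ i, 0 ≤ ℓ i)
    (hsorted : ∀ i j : Fin N, i ≤ j → ℓ (r i) ≤ ℓ (r j))
    (e c : Fin N → ZMod 2) (h : Child r e c) : zeta ℓ e ≤ zeta ℓ c := by
  rcases h with ⟨rfl, h, rfl⟩ | ⟨-, h, hc⟩
  · rw [zeta_update_one _ _ _ (by simp)]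
    linarith [hnn (r ⟨0, h⟩)]
  · have hb : e (r ⟨jstar r e, h⟩) ≠ 1 := by
      intro hb
      have := Finset.le_sup (f := fun j : Fin N => (j : ℕ) + 1)
        (s := Finset.univ.filter fun j : Fin N => e (r j) = 1)
        (b := ⟨jstar r e, h⟩) (by simpa using hb)
      change jstar r e + 1 ≤ jstar r e at this
      omega
    rcases hc with rfl | rfl
    · rw [zeta_update_one]
      · have h1 := zeta_update_zero ℓ hnn e
          (r ⟨jstar r e - 1, lt_of_le_of_lt (Nat.sub_le _ _) h⟩)
        have h2 := hsorted ⟨jstar r e - 1, lt_of_le_of_lt (Nat.sub_le _ _) h⟩ ⟨jstar r e, h⟩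
          (Nat.sub_le _ _)
        linarith
      · rw [Function.update_apply]
        split_ifs
        · simp
        · exact hb
    · rw [zeta_update_one _ _ _ hb]
      linarith [hnn (r ⟨jstar r e, h⟩)]

/-- Theorem 1, correctness of parallel SGRAND termination: with
nonnegative reliabilities sorted along `r`, let `V` be any set of valid error
patterns, and `E, S` be such that every element of `F₂^N` lies in
`E ∪ S ∪ {descendants of elements of S}`. If `e* ∈ E ∩ V` satisfies
`ζ(e*) ≤ ζ(e)` for all `e ∈ E ∩ V` and `ζ(e*) < ζ(s)` for all `s ∈ S`, then
`ζ(e*) ≤ ζ(e)` for all `e ∈ V`. -/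
theorem stmt13 {N : ℕ} (r : Equiv.Perm (Fin N)) (ℓ : Fin N → ℝ)
    (hnn : ∀ i, 0 ≤ ℓ i)
    (hsorted : ∀ i j : Fin N, i ≤ j → ℓ (r i) ≤ ℓ (r j))
    (V E S : Set (Fin N → ZMod 2))
    (hcover : ∀ e : Fin N → ZMod 2,
      e ∈ E ∨ e ∈ S ∨ ∃ s ∈ S, Relation.TransGen (Child r) s e)
    (estar : Fin N → ZMod 2) (hstar : estar ∈ E ∩ V)
    (hmin1 : ∀ e ∈ E ∩ V, zeta ℓ estar ≤ zeta ℓ e)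
    (hmin2 : ∀ s ∈ S, zeta ℓ estar < zeta ℓ s) :
    ∀ e ∈ V, zeta ℓ estar ≤ zeta ℓ e := by
  intro e he
  have key : ∀ s t, Relation.TransGen (Child r) s t → zeta ℓ s ≤ zeta ℓ t := by
    intro s t hst
    induction hst with
    | single h => exact child_zeta_le r ℓ hnn hsorted _ _ h
    | tail _ h ih => exact ih.trans (child_zeta_le r ℓ hnn hsorted _ _ h)
  rcases hcover e with h | h | ⟨s, hs, h⟩
  · exact hmin1 e ⟨h, he⟩
  · exact (hmin2 e h).le
  · exact (hmin2 s hs).le.trans (key s e h)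
end

section
/- (Proposition 2) Let γ ∈ ℝ^N satisfy 0 < γ_1 < γ_2 < … < γ_N, and define the γ-weight of e ∈ F_2^N as γ(e) = Σ_{i=1}^N γ_i · e_{r_i}. Let e(1), e(2), …, e(2^N) be a bijective enumeration of F_2^N with γ(e(1)) ≤ γ(e(2)) ≤ … ≤ γ(e(2^N)). Then for every T_0 with 1 ≤ T_0 ≤ 2^N, the set E_0 = {e(1), …, e(T_0)} contains the root 0 and contains the parent (in the EP tree) of each of its nonzero elements; i.e., E_0 forms a subtree of the EP tree that includes the root. -/
open scoped BigOperators

/-- The `γ`-weight of `e ∈ F₂^N`: `γ(e) = Σ_{i=1}^N γ_i · e_{r_i}`. -/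
noncomputable def gammaWeight {N : ℕ} (r : Equiv.Perm (Fin N)) (γ : Fin N → ℝ)
    (e : Fin N → ZMod 2) : ℝ :=
  ∑ i : Fin N, if e (r i) = 1 then γ i else 0

theorem gw_update {N : ℕ} (r : Equiv.Perm (Fin N)) (γ : Fin N → ℝ) (e : Fin N → ZMod 2)
    (k : Fin N) (b : ZMod 2) :
    gammaWeight r γ (Function.update e (r k) b) =
      gammaWeight r γ e - (if e (r k) = 1 then γ k else 0) + (if b = 1 then γ k else 0) := by
  unfold gammaWeight
  rw [← Finset.add_sum_erase _ _ (Finset.mem_univ k),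
    ← Finset.add_sum_erase (a := k) Finset.univ (fun i => if e (r i) = 1 then γ i else 0)
      (Finset.mem_univ k)]
  have : ∑ x ∈ Finset.univ.erase k, (if Function.update e (r k) b (r x) = 1 then γ x else 0)
      = ∑ x ∈ Finset.univ.erase k, (if e (r x) = 1 then γ x else 0) := by
    apply Finset.sum_congr rfl
    intro x hx
    have hxk : r x ≠ r k := fun h => (Finset.ne_of_mem_erase hx) (r.injective h)
    rw [Function.update_of_ne hxk]
  rw [this, Function.update_self]
  ring

theorem ne_one_of_jstar_le {N : ℕ} (r : Equiv.Perm (Fin N)) (e : Fin N → ZMod 2) (k : Fin N)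
    (h : jstar r e ≤ k) : e (r k) ≠ 1 := by
  intro h1
  have : (k : ℕ) + 1 ≤ jstar r e :=
    Finset.le_sup (f := fun j : Fin N => (j : ℕ) + 1) (by simp [h1])
  omega

theorem exists_one {N : ℕ} (r : Equiv.Perm (Fin N)) (e : Fin N → ZMod 2) (he : e ≠ 0) :
    ∃ k, e (r k) = 1 := by
  obtain ⟨i, hi⟩ := Function.ne_iff.mp he
  refine ⟨r.symm i, ?_⟩
  rw [Equiv.apply_symm_apply]
  have h2 : ∀ x : ZMod 2, x ≠ 0 → x = 1 := by decide
  exact h2 _ hi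

theorem gw_zero {N : ℕ} (r : Equiv.Perm (Fin N)) (γ : Fin N → ℝ) : gammaWeight r γ 0 = 0 := by
  simp [gammaWeight]

theorem gw_pos {N : ℕ} (r : Equiv.Perm (Fin N)) (γ : Fin N → ℝ) (hpos : ∀ i, 0 < γ i)
    (e : Fin N → ZMod 2) (he : e ≠ 0) : 0 < gammaWeight r γ e := by
  obtain ⟨k, hk⟩ := exists_one r e he
  unfold gammaWeight
  apply Finset.sum_pos'
  · intro i _
    split_ifs
    · exact (hpos i).le
    · exact le_rfl
  · exact ⟨k, Finset.mem_univ k, by simp [hk, hpos k]⟩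

theorem gw_child {N : ℕ} (r : Equiv.Perm (Fin N)) (γ : Fin N → ℝ)
    (hpos : ∀ i, 0 < γ i) (hmono : StrictMono γ) (p c : Fin N → ZMod 2) (h : Child r p c) :
    gammaWeight r γ p < gammaWeight r γ c := by
  rcases h with ⟨rfl, h, rfl⟩ | ⟨hp, h, rfl | rfl⟩
  · rw [gw_update]
    simp [hpos]
  · obtain ⟨k, hk⟩ := exists_one r p hp
    have hj : 0 < jstar r p := by
      by_contra h0
      exact ne_one_of_jstar_le r p k (by omega) hk
    have hne := ne_one_of_jstar_le r p ⟨jstar r p, h⟩ le_rfl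
    have hlt : (⟨jstar r p - 1, lt_of_le_of_lt (Nat.sub_le _ _) h⟩ : Fin N) < ⟨jstar r p, h⟩ := by
      rw [Fin.mk_lt_mk]; omega
    have hg := hmono hlt
    have h1 := hpos ⟨jstar r p, h⟩
    rw [gw_update, gw_update, Function.update_of_ne (fun h => hlt.ne' (r.injective h)),
      if_neg hne, if_pos rfl, if_neg (by decide : ¬ (0 : ZMod 2) = 1)]
    split_ifs <;> linarith
  · rw [gw_update, if_neg (ne_one_of_jstar_le r p _ le_rfl), if_pos rfl]
    linarith [hpos ⟨jstar r p, h⟩]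

/-- Proposition 2: with `0 < γ_1 < γ_2 < … < γ_N`, if
`e(1), …, e(2^N)` bijectively enumerates `F₂^N` in nondecreasing `γ`-weight order,
then for every `1 ≤ T₀ ≤ 2^N` the set `E₀ = {e(1), …, e(T₀)}` contains the root `0`
and contains the parent of each of its nonzero elements, i.e. it forms a subtree of
the EP tree including the root. -/
theorem stmt15 {N : ℕ} (r : Equiv.Perm (Fin N)) (γ : Fin N → ℝ)
    (hpos : ∀ i, 0 < γ i) (hmono : StrictMono γ)
    (E : Fin (2 ^ N) → (Fin N → ZMod 2)) (hbij : Function.Bijective E)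
    (hord : ∀ s t : Fin (2 ^ N), s ≤ t → gammaWeight r γ (E s) ≤ gammaWeight r γ (E t))
    (T₀ : ℕ) (hT₀ : 1 ≤ T₀) (hT₀' : T₀ ≤ 2 ^ N)
    (E₀ : Set (Fin N → ZMod 2))
    (hE₀ : E₀ = {x | ∃ t : Fin (2 ^ N), (t : ℕ) < T₀ ∧ E t = x}) :
    (0 : Fin N → ZMod 2) ∈ E₀ ∧
    ∀ e ∈ E₀, e ≠ 0 → ∀ p : Fin N → ZMod 2, Child r p e → p ∈ E₀ := by
  subst hE₀
  constructor
  · obtain ⟨s, hs⟩ := hbij.2 0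
    refine ⟨s, ?_, hs⟩
    by_contra hlt
    have h0 : (⟨0, by positivity⟩ : Fin (2 ^ N)) < s := by
      rw [Fin.lt_def]
      show 0 < (s : ℕ)
      omega
    have hne : E ⟨0, by positivity⟩ ≠ 0 := fun h => h0.ne (hbij.1 (h.trans hs.symm))
    have h1 := gw_pos r γ hpos _ hne
    have h2 := hord _ _ h0.le
    rw [hs, gw_zero] at h2
    linarith
  · rintro e ⟨t, ht, rfl⟩ _ p hp
    obtain ⟨s, rfl⟩ := hbij.2 p
    refine ⟨s, ?_, rfl⟩
    by_contra hlt
    have h1 := gw_child r γ hpos hmono _ _ hp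
    have h2 := hord t s (by rw [Fin.le_def]; omega)
    linarith
end

section
/- (Lemma 1, early termination / Taipale–Pursley condition) Let C ⊆ F_2^N be a code whose minimum Hamming distance is at least d, i.e., any two distinct elements of C differ in at least d coordinates, and let ℓ ∈ ℝ^N with ℓ_i ≥ 0 for all i. Fix z ∈ F_2^N and let e ∈ F_2^N satisfy z ⊕ e ∈ C. Let m = |{i : e_i = 1}| be the Hamming weight of e, and suppose m < d ≤ N and ζ(e) ≤ min { Σ_{i ∈ T} ℓ_i : T ⊆ {i : e_i = 0}, |T| = d − m }. Then for every e' ∈ F_2^N with z ⊕ e' ∈ C, one has ζ(e') ≥ ζ(e); that is, e minimizes the soft weight among all error patterns producing codewords, so z ⊕ e is a maximum-likelihood decoding result. -/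
open scoped BigOperators

/-- Lemma 1, early termination / Taipale–Pursley condition: let `C`
have minimum Hamming distance at least `d`, `ℓ ≥ 0`, and `z ⊕ e ∈ C` with Hamming
weight `m = |{i : e_i = 1}|`, `m < d ≤ N`. If `ζ(e)` is at most the sum of the
`d − m` smallest reliabilities among `{ℓ_i : e_i = 0}` (i.e. `ζ(e) ≤ Σ_{i ∈ T} ℓ_i`
for every `T ⊆ {i : e_i = 0}` with `|T| = d − m`), then `ζ(e') ≥ ζ(e)` for every
`e'` with `z ⊕ e' ∈ C`: `z ⊕ e` is a maximum-likelihood decoding result. -/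
theorem stmt18 {N : ℕ} (ℓ : Fin N → ℝ) (hnn : ∀ i, 0 ≤ ℓ i)
    (C : Set (Fin N → ZMod 2)) (d : ℕ)
    (hdist : ∀ c₁ ∈ C, ∀ c₂ ∈ C, c₁ ≠ c₂ → d ≤ hammingDist c₁ c₂)
    (z e : Fin N → ZMod 2) (hze : z + e ∈ C)
    (m : ℕ) (hm : m = (Finset.univ.filter fun i => e i = 1).card)
    (hmd : m < d) (hdN : d ≤ N)
    (hcond : ∀ T : Finset (Fin N), (∀ i ∈ T, e i = 0) → T.card = d - m →
      zeta ℓ e ≤ ∑ i ∈ T, ℓ i) :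
    ∀ e' : Fin N → ZMod 2, z + e' ∈ C → zeta ℓ e ≤ zeta ℓ e' := by
  intro e' he'
  by_cases hee : z + e = z + e'
  · rw [add_left_cancel hee]
  have hd := hdist _ hze _ he' hee
  have h2 : ∀ a : ZMod 2, a = 0 ∨ a = 1 := by decide
  have hsub : (Finset.univ.filter fun i => (z + e) i ≠ (z + e') i) ⊆
      (Finset.univ.filter fun i => e i = 1) ∪
        (Finset.univ.filter fun i => e i = 0 ∧ e' i = 1) := by
    intro i hi
    simp only [Finset.mem_filter, Finset.mem_univ, true_and, Finset.mem_union,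
      Pi.add_apply, ne_eq, add_right_inj] at hi ⊢
    rcases h2 (e i) with h | h
    · rcases h2 (e' i) with h' | h'
      · exact absurd (h.trans h'.symm) hi
      · exact Or.inr ⟨h, h'⟩
    · exact Or.inl h
  have hcard := (Finset.card_le_card hsub).trans (Finset.card_union_le _ _)
  rw [← hm] at hcard
  unfold hammingDist at hd
  have hle : d - m ≤ (Finset.univ.filter fun i => e i = 0 ∧ e' i = 1).card := by
    have := hd.trans hcard
    omega
  obtain ⟨T, hT, hTc⟩ := Finset.exists_subset_card_eq hle
  have hT' : ∀ i ∈ T, e i = 0 ∧ e' i = 1 := fun i hi => by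
    simpa using hT hi
  refine (hcond T (fun i hi => (hT' i hi).1) hTc).trans ?_
  unfold zeta
  rw [← Finset.sum_filter]
  refine Finset.sum_le_sum_of_subset_of_nonneg ?_ (fun i _ _ => hnn i)
  intro i hi
  simpa using (hT' i hi).2
end
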